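/- Let θ be a ℂ-algebra automorphism of V = Ǔ^{≥0}_{r,s}(sl_3). Then there exist a_1, a_2 ∈ ℂ^* and NONNEGATIVE integers x, y, z, w such that θ(K_1) = a_1 K_1^x K_2^y and θ(K_2) = a_2 K_1^z K_2^w; moreover the integer matrix M = [[x, y], [z, w]] satisfies xw − yz = ±1 and its inverse M^{-1} also has nonnegative integer entries (i.e., M ∈ GL(2, ℤ_{≥0})). -/

import Mathlib

/-!
Every automorphism `θ` of `V` in fact rescales `K₁` and `K₂`, so the exponent matrix is always the
identity (`aut_scales`).

The tool is a Feigin-type embedding of `V` into a quantum torus with monomials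
`x₁^a₁ x₂^a₂ x₃^a₃ K₁^m K₂^n`, given by `E₁ ↦ x₁ + x₃`, `E₂ ↦ x₂`, `Kᵢ ↦ Kᵢ`. The torus is
realized on `QExp →₀ ℂ`, `QExp = ℤ⁵`, through its left multiplication operators. The PBW monomials
`E₂^c E₃^b E₁^a K₁^m K₂^n` span `V` (`span_pbw`), and their images have distinct leading terms with
respect to the degree in `x₃`, so the embedding is injective (`psi_injective`).

Since `ℤ⁵` has the two-unique-sums property, a unit of the torus is a scalar multiple of a monomial
(`single_of_lmul_eq_one`); elements of `V` involve only nonnegative powers of the `xᵢ`, so a unit of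
`V` is a multiple of some `K₁^m K₂^n` (`psi_unit`). Hence `θ(K₁)` and `θ(K₂)` have exponents
`(x, y)` and `(z, w)`. Any monomial occurring in the nonzero element `θ(Eᵢ)` must commute with
`θ(Kⱼ)` by the same scalar as `Eᵢ` does with `Kⱼ` (`twist_eq_of_qcomm`). As `ρ` and `σ` are
multiplicatively independent, this gives eight integer equations in `x, y, z, w` and the
nonnegative bidegrees of two such monomials, one in `θ(E₁)` and one in `θ(E₂)`; their only solution
has `[[x, y], [z, w]]` equal to the identity (`exponents_eq_one`).
-/


noncomputable section

open FreeAlgebra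

/-- The defining relations of the augmented Hopf algebra `Ǔ^{≥0}_{r,s}(sl₃)` (with
`r = ρ³`, `s = σ³`) as a quotient of the free algebra on six generators:
generator `0` is `E₁`, `1` is `E₂`, `2` is `K₁`, `3` is `K₁⁻¹`, `4` is `K₂`, `5` is `K₂⁻¹`. -/
inductive VRel (ρ σ : ℂ) : FreeAlgebra ℂ (Fin 6) → FreeAlgebra ℂ (Fin 6) → Prop
  | k1inv : VRel ρ σ (ι ℂ (2 : Fin 6) * ι ℂ 3) 1
  | invk1 : VRel ρ σ (ι ℂ (3 : Fin 6) * ι ℂ 2) 1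
  | k2inv : VRel ρ σ (ι ℂ (4 : Fin 6) * ι ℂ 5) 1
  | invk2 : VRel ρ σ (ι ℂ (5 : Fin 6) * ι ℂ 4) 1
  | k1k2 : VRel ρ σ (ι ℂ (2 : Fin 6) * ι ℂ 4) (ι ℂ (4 : Fin 6) * ι ℂ 2)
  | k1e1 : VRel ρ σ (ι ℂ (2 : Fin 6) * ι ℂ 0) ((ρ * (σ ^ 2)⁻¹) • (ι ℂ (0 : Fin 6) * ι ℂ 2))
  | k1e2 : VRel ρ σ (ι ℂ (2 : Fin 6) * ι ℂ 1) ((ρ * σ) • (ι ℂ (1 : Fin 6) * ι ℂ 2))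
  | k2e1 : VRel ρ σ (ι ℂ (4 : Fin 6) * ι ℂ 0) ((ρ⁻¹ * σ⁻¹) • (ι ℂ (0 : Fin 6) * ι ℂ 4))
  | k2e2 : VRel ρ σ (ι ℂ (4 : Fin 6) * ι ℂ 1) ((ρ ^ 2 * σ⁻¹) • (ι ℂ (1 : Fin 6) * ι ℂ 4))
  | serre1 : VRel ρ σ
      (ι ℂ (0 : Fin 6) * ι ℂ 0 * ι ℂ 1 - (ρ ^ 3 + σ ^ 3) • (ι ℂ (0 : Fin 6) * ι ℂ 1 * ι ℂ 0)
        + (ρ ^ 3 * σ ^ 3) • (ι ℂ (1 : Fin 6) * ι ℂ 0 * ι ℂ 0)) 0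
  | serre2 : VRel ρ σ
      (ι ℂ (0 : Fin 6) * ι ℂ 1 * ι ℂ 1 - (ρ ^ 3 + σ ^ 3) • (ι ℂ (1 : Fin 6) * ι ℂ 0 * ι ℂ 1)
        + (ρ ^ 3 * σ ^ 3) • (ι ℂ (1 : Fin 6) * ι ℂ 1 * ι ℂ 0)) 0

/-- The augmented Hopf algebra `Ǔ^{≥0}_{r,s}(sl₃)`. -/
abbrev Vsl3 (ρ σ : ℂ) := RingQuot (VRel ρ σ)

def vE₁ (ρ σ : ℂ) : Vsl3 ρ σ := RingQuot.mkAlgHom ℂ (VRel ρ σ) (ι ℂ 0)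
def vE₂ (ρ σ : ℂ) : Vsl3 ρ σ := RingQuot.mkAlgHom ℂ (VRel ρ σ) (ι ℂ 1)
def K₁ (ρ σ : ℂ) : Vsl3 ρ σ := RingQuot.mkAlgHom ℂ (VRel ρ σ) (ι ℂ 2)
def K₁inv (ρ σ : ℂ) : Vsl3 ρ σ := RingQuot.mkAlgHom ℂ (VRel ρ σ) (ι ℂ 3)
def K₂ (ρ σ : ℂ) : Vsl3 ρ σ := RingQuot.mkAlgHom ℂ (VRel ρ σ) (ι ℂ 4)
def K₂inv (ρ σ : ℂ) : Vsl3 ρ σ := RingQuot.mkAlgHom ℂ (VRel ρ σ) (ι ℂ 5)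
def vE₃ (ρ σ : ℂ) : Vsl3 ρ σ := vE₁ ρ σ * vE₂ ρ σ - σ ^ 3 • (vE₂ ρ σ * vE₁ ρ σ)

/-- Integer powers of `K₁`: for negative `m`, `K₁^m` means `(K₁⁻¹)^(-m)`. -/
def K₁z (ρ σ : ℂ) (m : ℤ) : Vsl3 ρ σ :=
  if 0 ≤ m then K₁ ρ σ ^ m.toNat else K₁inv ρ σ ^ (-m).toNat

/-- Integer powers of `K₂`: for negative `n`, `K₂^n` means `(K₂⁻¹)^(-n)`. -/
def K₂z (ρ σ : ℂ) (n : ℤ) : Vsl3 ρ σ :=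
  if 0 ≤ n then K₂ ρ σ ^ n.toNat else K₂inv ρ σ ^ (-n).toNat

/-! ### The quantum torus -/

/-- Exponents `(a₁, a₂, a₃, m, n)` of the monomials `x₁^a₁ x₂^a₂ x₃^a₃ K₁^m K₂^n` of the
quantum torus. -/
abbrev QExp := ℤ × ℤ × ℤ × ℤ × ℤ

/-- Exponent of `ρ` in the cocycle `twist`; a bilinear form on `QExp`. -/
def expA (g h : QExp) : ℤ :=
  3 * g.1 * h.2.1 + 3 * g.2.2.1 * h.1 + g.2.2.2.1 * (h.1 + h.2.2.1 + h.2.1)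
    + g.2.2.2.2 * (2 * h.2.1 - h.1 - h.2.2.1)

/-- Exponent of `σ` in the cocycle `twist`; a bilinear form on `QExp`. -/
def expB (g h : QExp) : ℤ :=
  3 * g.2.2.1 * h.2.1 - 3 * g.2.2.1 * h.1 + g.2.2.2.1 * (h.2.1 - 2 * h.1 - 2 * h.2.2.1)
    - g.2.2.2.2 * (h.1 + h.2.2.1 + h.2.1)

/-- The bicharacter `β` of `QExp` with `x^g x^h = β(g, h) x^(g+h)` in the quantum torus. It is chosen
so that `x₁x₂ = r x₂x₁`, `x₃x₂ = s x₂x₃`, `x₃x₁ = (r/s) x₁x₃`, and so that `K₁`, `K₂` commute with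
`x₁` and `x₃` as with `E₁`, and with `x₂` as with `E₂`. -/
def twist (ρ σ : ℂ) (g h : QExp) : ℂ := ρ ^ expA g h * σ ^ expB g h

/-- Left multiplication by the monomial `x^g` on the quantum torus, whose underlying vector space
is `QExp →₀ ℂ`. -/
def lmon (ρ σ : ℂ) (g : QExp) : Module.End ℂ (QExp →₀ ℂ) :=
  Finsupp.lsum ℂ fun h => twist ρ σ g h • Finsupp.lsingle (g + h)

/-- Left multiplication by an arbitrary element of the quantum torus. -/
def lmul (ρ σ : ℂ) : (QExp →₀ ℂ) →ₗ[ℂ] Module.End ℂ (QExp →₀ ℂ) :=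
  Finsupp.linearCombination ℂ (lmon ρ σ)

lemma twist_ne_zero {ρ σ : ℂ} (hρ : ρ ≠ 0) (hσ : σ ≠ 0) (g h : QExp) : twist ρ σ g h ≠ 0 :=
  mul_ne_zero (zpow_ne_zero _ hρ) (zpow_ne_zero _ hσ)

lemma lmon_single (ρ σ : ℂ) (g h : QExp) (a : ℂ) :
    lmon ρ σ g (Finsupp.single h a) = Finsupp.single (g + h) (twist ρ σ g h * a) := by
  simp [lmon]

lemma lmon_mul {ρ σ : ℂ} (hρ : ρ ≠ 0) (hσ : σ ≠ 0) (g h : QExp) :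
    lmon ρ σ g * lmon ρ σ h = twist ρ σ g h • lmon ρ σ (g + h) := by
  refine Finsupp.lhom_ext fun k a => ?_
  simp only [Module.End.mul_apply, LinearMap.smul_apply, lmon_single, Finsupp.smul_single,
    smul_eq_mul, add_assoc]
  congr 1
  have h1 : expA g (h + k) + expA h k = expA g h + expA (g + h) k := by
    simp [expA]; ring
  have h2 : expB g (h + k) + expB h k = expB g h + expB (g + h) k := by
    simp [expB]; ring
  have h3 : ρ ^ expA g (h + k) * ρ ^ expA h k = ρ ^ expA g h * ρ ^ expA (g + h) k := by
    rw [← zpow_add₀ hρ, ← zpow_add₀ hρ, h1]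
  have h4 : σ ^ expB g (h + k) * σ ^ expB h k = σ ^ expB g h * σ ^ expB (g + h) k := by
    rw [← zpow_add₀ hσ, ← zpow_add₀ hσ, h2]
  unfold twist
  linear_combination (σ ^ expB g (h + k) * σ ^ expB h k * a) * h3
    + (ρ ^ expA g h * ρ ^ expA (g + h) k * a) * h4

lemma lmon_zero (ρ σ : ℂ) : lmon ρ σ 0 = 1 := by
  refine Finsupp.lhom_ext fun k a => ?_
  simp [lmon_single, twist, expA, expB]

lemma lmul_single (ρ σ : ℂ) (g : QExp) (a : ℂ) :
    lmul ρ σ (Finsupp.single g a) = a • lmon ρ σ g := by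
  simp [lmul]

lemma lmon_mul_lmul {ρ σ : ℂ} (hρ : ρ ≠ 0) (hσ : σ ≠ 0) (g : QExp) (f : QExp →₀ ℂ) :
    lmon ρ σ g * lmul ρ σ f = lmul ρ σ (lmon ρ σ g f) := by
  induction f using Finsupp.induction_linear with
  | zero => simp
  | add f f' h h' => simp [mul_add, h, h']
  | single h a =>
    rw [lmon_single, lmul_single, lmul_single, mul_smul_comm, lmon_mul hρ hσ, smul_smul, mul_comm]

lemma lmul_apply (ρ σ : ℂ) (f f' : QExp →₀ ℂ) (k : QExp) :
    lmul ρ σ f f' k = ∑ g ∈ f.support, ∑ h ∈ f'.support,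
      if g + h = k then f g * (twist ρ σ g h * f' h) else 0 := by
  have h1 : lmul ρ σ f f' = ∑ g ∈ f.support, f g • lmon ρ σ g f' := by
    simp [lmul, Finsupp.linearCombination_apply, Finsupp.sum, LinearMap.sum_apply]
  have h2 : ∀ g, lmon ρ σ g f'
      = ∑ h ∈ f'.support, Finsupp.single (g + h) (twist ρ σ g h * f' h) := by
    intro g
    conv_lhs => rw [← f'.sum_single]
    simp only [Finsupp.sum, map_sum, lmon_single]
  rw [h1, Finsupp.finsetSum_apply]
  refine Finset.sum_congr rfl fun g _ => ?_
  rw [h2, Finsupp.smul_apply, Finsupp.finsetSum_apply, smul_eq_mul, Finset.mul_sum]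
  refine Finset.sum_congr rfl fun h _ => ?_
  rw [Finsupp.single_apply]
  split_ifs <;> simp

/-- No cancellation occurs at a sum of exponents that is attained only once. -/
lemma lmul_apply_of_unique (ρ σ : ℂ) {f f' : QExp →₀ ℂ} {g₀ h₀ : QExp}
    (hu : UniqueAdd f.support f'.support g₀ h₀) :
    lmul ρ σ f f' (g₀ + h₀) = f g₀ * (twist ρ σ g₀ h₀ * f' h₀) := by
  rw [lmul_apply, Finset.sum_eq_single g₀, Finset.sum_eq_single h₀]
  · simp
  · intro h _ hne
    rw [if_neg]
    simpa using hne
  · intro h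
    simp [Finsupp.notMem_support_iff.1 h]
  · intro g hg hne
    refine Finset.sum_eq_zero fun h hh => ?_
    rw [if_neg]
    exact fun e => hne (hu hg hh e).1
  · intro h
    refine Finset.sum_eq_zero fun h _ => ?_
    simp [Finsupp.notMem_support_iff.1 ‹_›]

lemma exists_of_lmul_apply_ne_zero {ρ σ : ℂ} {f f' : QExp →₀ ℂ} {k : QExp}
    (hk : lmul ρ σ f f' k ≠ 0) : ∃ g ∈ f.support, ∃ h ∈ f'.support, g + h = k := by
  rw [lmul_apply] at hk
  obtain ⟨g, hg, h1⟩ := Finset.exists_ne_zero_of_sum_ne_zero hk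
  obtain ⟨h, hh, h2⟩ := Finset.exists_ne_zero_of_sum_ne_zero h1
  exact ⟨g, hg, h, hh, by by_contra hne; simp [hne] at h2⟩

/-- The units of the quantum torus are the nonzero multiples of monomials, because `ℤ⁵` has the
two-unique-sums property. -/
lemma single_of_lmul_eq_one {ρ σ : ℂ} (hρ : ρ ≠ 0) (hσ : σ ≠ 0) {f f' : QExp →₀ ℂ}
    (h : lmul ρ σ f f' = Finsupp.single 0 1) :
    ∃ g c d, c ≠ 0 ∧ d ≠ 0 ∧ f = Finsupp.single g c ∧ f' = Finsupp.single (-g) d := by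
  have hne : ∀ p : QExp × QExp, p ∈ f.support ×ˢ f'.support →
      UniqueAdd f.support f'.support p.1 p.2 → p.1 + p.2 = 0 := by
    intro p hp hu
    have h1 := lmul_apply_of_unique ρ σ hu
    rw [h] at h1
    rw [Finset.mem_product, Finsupp.mem_support_iff, Finsupp.mem_support_iff] at hp
    by_contra h0
    rw [Finsupp.single_eq_of_ne h0] at h1
    exact mul_ne_zero hp.1 (mul_ne_zero (twist_ne_zero hρ hσ _ _) hp.2) h1.symm
  have hcard : f.support.card * f'.support.card ≤ 1 := by
    by_contra! hlt
    obtain ⟨p, hp, q, hq, hpq, hup, huq⟩ := TwoUniqueSums.uniqueAdd_of_one_lt_card hlt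
    have e := (hne p hp hup).trans (hne q hq huq).symm
    rw [Finset.mem_product] at hp
    obtain ⟨h1, h2⟩ := huq hp.1 hp.2 e
    exact hpq (Prod.ext h1 h2)
  obtain ⟨g, hg, k, hk, hgk⟩ := exists_of_lmul_apply_ne_zero (ρ := ρ) (σ := σ) (f := f) (f' := f')
    (k := 0) (by rw [h]; simp)
  have c1 := Finset.card_pos.2 ⟨g, hg⟩
  have c2 := Finset.card_pos.2 ⟨k, hk⟩
  obtain ⟨g', c, hc, rfl⟩ := Finsupp.card_support_eq_one'.1
    (show f.support.card = 1 by nlinarith)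
  obtain ⟨k', d, hd, rfl⟩ := Finsupp.card_support_eq_one'.1
    (show f'.support.card = 1 by nlinarith)
  have e1 := Finset.mem_singleton.1 (Finsupp.support_single_subset hg)
  have e2 := Finset.mem_singleton.1 (Finsupp.support_single_subset hk)
  subst e1 e2
  exact ⟨g, c, d, hc, hd, rfl, by rw [eq_neg_of_add_eq_zero_right hgk]⟩

/-- `g` is the leading exponent of `f` with respect to the degree in `x₃`. -/
def IsLead (f : QExp →₀ ℂ) (g : QExp) : Prop :=
  f g ≠ 0 ∧ ∀ h ∈ f.support, h = g ∨ h.2.2.1 < g.2.2.1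

lemma isLead_single (g : QExp) {a : ℂ} (ha : a ≠ 0) : IsLead (Finsupp.single g a) g :=
  ⟨by simpa using ha, fun _ hh => Or.inl (Finset.mem_singleton.1 (Finsupp.support_single_subset hh))⟩

lemma IsLead.lmul {ρ σ : ℂ} (hρ : ρ ≠ 0) (hσ : σ ≠ 0) {f f' : QExp →₀ ℂ} {g g' : QExp}
    (h : IsLead f g) (h' : IsLead f' g') : IsLead (lmul ρ σ f f') (g + g') := by
  constructor
  · rw [lmul_apply_of_unique]
    · exact mul_ne_zero h.1 (mul_ne_zero (twist_ne_zero hρ hσ _ _) h'.1)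
    · intro a b ha hb hab
      have e := congrArg (fun t : QExp => t.2.2.1) hab
      simp only [Prod.snd_add, Prod.fst_add] at e
      rcases h.2 a ha with rfl | h1
      · exact ⟨rfl, add_left_cancel hab⟩
      · rcases h'.2 b hb with rfl | h2
        · exact ⟨add_right_cancel hab, rfl⟩
        · omega
  · intro k hk
    obtain ⟨a, ha, b, hb, rfl⟩ := exists_of_lmul_apply_ne_zero (Finsupp.mem_support_iff.1 hk)
    simp only [Prod.snd_add, Prod.fst_add]
    rcases h.2 a ha with rfl | h1
    · rcases h'.2 b hb with rfl | h2
      · exact Or.inl rfl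
      · right; omega
    · rcases h'.2 b hb with rfl | h2
      · right; omega
      · right; omega

/-! ### The algebra `V` and its spanning monomials -/

section VAlgebra

variable (ρ σ : ℂ)

/-- Induction principle: a subspace of `V` containing `1` and stable under left multiplication by
the generators is everything. -/
lemma V_left_induction (W : Submodule ℂ (Vsl3 ρ σ)) (h1 : 1 ∈ W)
    (hE₁ : ∀ w ∈ W, vE₁ ρ σ * w ∈ W) (hE₂ : ∀ w ∈ W, vE₂ ρ σ * w ∈ W)
    (hK₁ : ∀ w ∈ W, K₁ ρ σ * w ∈ W) (hK₁' : ∀ w ∈ W, K₁inv ρ σ * w ∈ W)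
    (hK₂ : ∀ w ∈ W, K₂ ρ σ * w ∈ W) (hK₂' : ∀ w ∈ W, K₂inv ρ σ * w ∈ W)
    (v : Vsl3 ρ σ) : v ∈ W := by
  obtain ⟨a, rfl⟩ := RingQuot.mkAlgHom_surjective ℂ (VRel ρ σ) v
  suffices h : ∀ w ∈ W, RingQuot.mkAlgHom ℂ (VRel ρ σ) a * w ∈ W by simpa using h 1 h1
  induction a using FreeAlgebra.induction with
  | grade0 c =>
    intro w hw
    rw [AlgHom.commutes, ← Algebra.smul_def]
    exact W.smul_mem c hw
  | grade1 i =>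
    fin_cases i
    exacts [hE₁, hE₂, hK₁, hK₁', hK₂, hK₂']
  | mul a b ha hb =>
    intro w hw
    rw [map_mul, mul_assoc]
    exact ha _ (hb w hw)
  | add a b ha hb =>
    intro w hw
    rw [map_add, add_mul]
    exact W.add_mem (ha w hw) (hb w hw)

lemma K₁_mul_inv : K₁ ρ σ * K₁inv ρ σ = 1 := by
  simpa [K₁, K₁inv] using RingQuot.mkAlgHom_rel ℂ (VRel.k1inv (ρ := ρ) (σ := σ))
lemma K₁_inv_mul : K₁inv ρ σ * K₁ ρ σ = 1 := by
  simpa [K₁, K₁inv] using RingQuot.mkAlgHom_rel ℂ (VRel.invk1 (ρ := ρ) (σ := σ))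
lemma K₂_mul_inv : K₂ ρ σ * K₂inv ρ σ = 1 := by
  simpa [K₂, K₂inv] using RingQuot.mkAlgHom_rel ℂ (VRel.k2inv (ρ := ρ) (σ := σ))
lemma K₂_inv_mul : K₂inv ρ σ * K₂ ρ σ = 1 := by
  simpa [K₂, K₂inv] using RingQuot.mkAlgHom_rel ℂ (VRel.invk2 (ρ := ρ) (σ := σ))
lemma K₁_mul_K₂ : K₁ ρ σ * K₂ ρ σ = K₂ ρ σ * K₁ ρ σ := by
  simpa [K₁, K₂] using RingQuot.mkAlgHom_rel ℂ (VRel.k1k2 (ρ := ρ) (σ := σ))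
lemma K₁_mul_E₁ : K₁ ρ σ * vE₁ ρ σ = (ρ * (σ ^ 2)⁻¹) • (vE₁ ρ σ * K₁ ρ σ) := by
  simpa only [K₁, vE₁, map_mul, map_smul] using
    RingQuot.mkAlgHom_rel ℂ (VRel.k1e1 (ρ := ρ) (σ := σ))
lemma K₁_mul_E₂ : K₁ ρ σ * vE₂ ρ σ = (ρ * σ) • (vE₂ ρ σ * K₁ ρ σ) := by
  simpa only [K₁, vE₂, map_mul, map_smul] using
    RingQuot.mkAlgHom_rel ℂ (VRel.k1e2 (ρ := ρ) (σ := σ))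
lemma K₂_mul_E₁ : K₂ ρ σ * vE₁ ρ σ = (ρ⁻¹ * σ⁻¹) • (vE₁ ρ σ * K₂ ρ σ) := by
  simpa only [K₂, vE₁, map_mul, map_smul] using
    RingQuot.mkAlgHom_rel ℂ (VRel.k2e1 (ρ := ρ) (σ := σ))
lemma K₂_mul_E₂ : K₂ ρ σ * vE₂ ρ σ = (ρ ^ 2 * σ⁻¹) • (vE₂ ρ σ * K₂ ρ σ) := by
  simpa only [K₂, vE₂, map_mul, map_smul] using
    RingQuot.mkAlgHom_rel ℂ (VRel.k2e2 (ρ := ρ) (σ := σ))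

lemma E₁_mul_E₂ : vE₁ ρ σ * vE₂ ρ σ = σ ^ 3 • (vE₂ ρ σ * vE₁ ρ σ) + vE₃ ρ σ := by
  rw [vE₃]; abel

lemma E₁_mul_E₃ : vE₁ ρ σ * vE₃ ρ σ = ρ ^ 3 • (vE₃ ρ σ * vE₁ ρ σ) := by
  have h := RingQuot.mkAlgHom_rel ℂ (VRel.serre1 (ρ := ρ) (σ := σ))
  simp only [map_mul, map_smul, map_add, map_sub, map_zero] at h
  change vE₁ ρ σ * vE₁ ρ σ * vE₂ ρ σ - (ρ ^ 3 + σ ^ 3) • (vE₁ ρ σ * vE₂ ρ σ * vE₁ ρ σ)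
    + (ρ ^ 3 * σ ^ 3) • (vE₂ ρ σ * vE₁ ρ σ * vE₁ ρ σ) = 0 at h
  rw [← sub_eq_zero, ← h, vE₃]
  simp only [mul_sub, sub_mul, mul_smul_comm, smul_mul_assoc, mul_assoc]
  module

lemma E₃_mul_E₂ : vE₃ ρ σ * vE₂ ρ σ = ρ ^ 3 • (vE₂ ρ σ * vE₃ ρ σ) := by
  have h := RingQuot.mkAlgHom_rel ℂ (VRel.serre2 (ρ := ρ) (σ := σ))
  simp only [map_mul, map_smul, map_add, map_sub, map_zero] at h
  change vE₁ ρ σ * vE₂ ρ σ * vE₂ ρ σ - (ρ ^ 3 + σ ^ 3) • (vE₂ ρ σ * vE₁ ρ σ * vE₂ ρ σ)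
    + (ρ ^ 3 * σ ^ 3) • (vE₂ ρ σ * vE₂ ρ σ * vE₁ ρ σ) = 0 at h
  rw [← sub_eq_zero, ← h, vE₃]
  simp only [mul_sub, sub_mul, mul_smul_comm, smul_mul_assoc, mul_assoc]
  module

/-- `K₁` as a unit of `V`. -/
def uK₁ : (Vsl3 ρ σ)ˣ := ⟨K₁ ρ σ, K₁inv ρ σ, K₁_mul_inv ρ σ, K₁_inv_mul ρ σ⟩
/-- `K₂` as a unit of `V`. -/
def uK₂ : (Vsl3 ρ σ)ˣ := ⟨K₂ ρ σ, K₂inv ρ σ, K₂_mul_inv ρ σ, K₂_inv_mul ρ σ⟩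

/-- The PBW monomial `E₂^c E₃^b E₁^a K₁^m K₂^n`, indexed by `(c, b, a, m, n)`. -/
def pbw (i : ℕ × ℕ × ℕ × ℤ × ℤ) : Vsl3 ρ σ :=
  vE₂ ρ σ ^ i.1 * (vE₃ ρ σ ^ i.2.1 * (vE₁ ρ σ ^ i.2.2.1 *
    (((uK₁ ρ σ ^ i.2.2.2.1 : (Vsl3 ρ σ)ˣ) : Vsl3 ρ σ) * (uK₂ ρ σ ^ i.2.2.2.2 : (Vsl3 ρ σ)ˣ))))

variable {ρ σ}

lemma qcomm_pow {x y : Vsl3 ρ σ} {q : ℂ} (h : x * y = q • (y * x)) (n : ℕ) :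
    x * y ^ n = q ^ n • (y ^ n * x) := by
  induction n with
  | zero => simp
  | succ n ih =>
    rw [pow_succ, ← mul_assoc, ih, smul_mul_assoc, mul_assoc, h, mul_smul_comm, smul_smul,
      ← pow_succ, mul_assoc]

lemma qcomm_pow_mul {x y : Vsl3 ρ σ} {q : ℂ} (h : x * y = q • (y * x)) (n : ℕ) (z : Vsl3 ρ σ) :
    x * (y ^ n * z) = q ^ n • (y ^ n * (x * z)) := by
  rw [← mul_assoc, qcomm_pow h, smul_mul_assoc, mul_assoc]

lemma qcomm_inv {u : (Vsl3 ρ σ)ˣ} {y : Vsl3 ρ σ} {q : ℂ} (hq : q ≠ 0)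
    (h : (u : Vsl3 ρ σ) * y = q • (y * u)) :
    ((u⁻¹ : (Vsl3 ρ σ)ˣ) : Vsl3 ρ σ) * y = q⁻¹ • (y * (u⁻¹ : (Vsl3 ρ σ)ˣ)) := by
  rw [Units.inv_mul_eq_iff_eq_mul, mul_smul_comm, ← mul_assoc, h, smul_mul_assoc, smul_smul,
    inv_mul_cancel₀ hq, one_smul, Units.mul_inv_cancel_right]

lemma qcomm_E₃ {x : Vsl3 ρ σ} {p q : ℂ} (h₁ : x * vE₁ ρ σ = p • (vE₁ ρ σ * x))
    (h₂ : x * vE₂ ρ σ = q • (vE₂ ρ σ * x)) :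
    x * vE₃ ρ σ = (p * q) • (vE₃ ρ σ * x) := by
  have e1 : x * (vE₁ ρ σ * vE₂ ρ σ) = (p * q) • (vE₁ ρ σ * vE₂ ρ σ * x) := by
    rw [← mul_assoc, h₁, smul_mul_assoc, mul_assoc, h₂, mul_smul_comm, smul_smul, mul_assoc]
  have e2 : x * (vE₂ ρ σ * vE₁ ρ σ) = (p * q) • (vE₂ ρ σ * vE₁ ρ σ * x) := by
    rw [← mul_assoc, h₂, smul_mul_assoc, mul_assoc, h₁, mul_smul_comm, smul_smul, mul_assoc,
      mul_comm q p]
  rw [vE₃, mul_sub, mul_smul_comm, e1, e2, sub_mul, smul_mul_assoc, smul_sub, smul_comm]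

lemma torus_mul_pbw {x : Vsl3 ρ σ} {p q : ℂ} (h₁ : x * vE₁ ρ σ = p • (vE₁ ρ σ * x))
    (h₂ : x * vE₂ ρ σ = q • (vE₂ ρ σ * x)) {i j : ℕ × ℕ × ℕ × ℤ × ℤ} (hc : j.1 = i.1)
    (hb : j.2.1 = i.2.1) (ha : j.2.2.1 = i.2.2.1)
    (h : x * (((uK₁ ρ σ ^ i.2.2.2.1 : (Vsl3 ρ σ)ˣ) : Vsl3 ρ σ) *
        (uK₂ ρ σ ^ i.2.2.2.2 : (Vsl3 ρ σ)ˣ)) =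
      ((uK₁ ρ σ ^ j.2.2.2.1 : (Vsl3 ρ σ)ˣ) : Vsl3 ρ σ) * (uK₂ ρ σ ^ j.2.2.2.2 : (Vsl3 ρ σ)ˣ)) :
    x * pbw ρ σ i ∈ Submodule.span ℂ (Set.range (pbw ρ σ)) := by
  have key : x * pbw ρ σ i =
      (q ^ i.1 * ((p * q) ^ i.2.1 * p ^ i.2.2.1)) • pbw ρ σ j := by
    rw [pbw, pbw, qcomm_pow_mul h₂, qcomm_pow_mul (qcomm_E₃ h₁ h₂), qcomm_pow_mul h₁, h, hc, hb, ha]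
    simp only [mul_smul_comm, smul_smul]
  rw [key]
  exact Submodule.smul_mem _ _ (Submodule.subset_span ⟨j, rfl⟩)

lemma mul_mem_span_of_basis {x : Vsl3 ρ σ}
    (h : ∀ i, x * pbw ρ σ i ∈ Submodule.span ℂ (Set.range (pbw ρ σ))) (w : Vsl3 ρ σ)
    (hw : w ∈ Submodule.span ℂ (Set.range (pbw ρ σ))) :
    x * w ∈ Submodule.span ℂ (Set.range (pbw ρ σ)) := by
  induction hw using Submodule.span_induction with
  | mem w hw => obtain ⟨i, rfl⟩ := hw; exact h i
  | zero => simp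
  | add a b _ _ ha hb => rw [mul_add]; exact Submodule.add_mem _ ha hb
  | smul c a _ ha => rw [mul_smul_comm]; exact Submodule.smul_mem _ _ ha

lemma commute_uK : Commute (uK₁ ρ σ) (uK₂ ρ σ) :=
  Units.ext (K₁_mul_K₂ ρ σ)

/-- The PBW monomials span `V`. -/
lemma span_pbw (hρ : ρ ≠ 0) (hσ : σ ≠ 0) (v : Vsl3 ρ σ) :
    v ∈ Submodule.span ℂ (Set.range (pbw ρ σ)) := by
  have hE₂ : ∀ i, vE₂ ρ σ * pbw ρ σ i ∈ Submodule.span ℂ (Set.range (pbw ρ σ)) := by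
    rintro ⟨c, b, a, m, n⟩
    refine Submodule.subset_span ⟨(c + 1, b, a, m, n), ?_⟩
    simp only [pbw, pow_succ', mul_assoc]
  have hE₁ : ∀ i, vE₁ ρ σ * pbw ρ σ i ∈ Submodule.span ℂ (Set.range (pbw ρ σ)) := by
    rintro ⟨c, b, a, m, n⟩
    induction c with
    | zero =>
      have e : vE₁ ρ σ * pbw ρ σ (0, b, a, m, n)
          = (ρ ^ 3) ^ b • pbw ρ σ (0, b, a + 1, m, n) := by
        simp only [pbw, pow_zero, one_mul]
        rw [qcomm_pow_mul (E₁_mul_E₃ ρ σ)]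
        simp only [pow_succ', mul_assoc]
      rw [e]
      exact Submodule.smul_mem _ _ (Submodule.subset_span ⟨_, rfl⟩)
    | succ c ih =>
      -- `E₁E₂ = s E₂E₁ + E₃`, and `E₃` moves through the powers of `E₂` up to a scalar.
      have e1 : pbw ρ σ (c + 1, b, a, m, n) = vE₂ ρ σ * pbw ρ σ (c, b, a, m, n) := by
        simp only [pbw, pow_succ', mul_assoc]
      have e2 : vE₃ ρ σ * pbw ρ σ (c, b, a, m, n)
          = (ρ ^ 3) ^ c • pbw ρ σ (c, b + 1, a, m, n) := by
        simp only [pbw]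
        rw [qcomm_pow_mul (E₃_mul_E₂ ρ σ)]
        simp only [pow_succ', mul_assoc]
      rw [e1, ← mul_assoc, E₁_mul_E₂, add_mul, smul_mul_assoc, mul_assoc, e2]
      exact Submodule.add_mem _ (Submodule.smul_mem _ _ (mul_mem_span_of_basis hE₂ _ ih))
        (Submodule.smul_mem _ _ (Submodule.subset_span ⟨_, rfl⟩))
  have h11 : ρ * (σ ^ 2)⁻¹ ≠ 0 := by simp [hρ, hσ]
  have h12 : ρ * σ ≠ 0 := by simp [hρ, hσ]
  have h21 : ρ⁻¹ * σ⁻¹ ≠ 0 := by simp [hρ, hσ]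
  have h22 : ρ ^ 2 * σ⁻¹ ≠ 0 := by simp [hρ, hσ]
  have hone : (1 : Vsl3 ρ σ) ∈ Submodule.span ℂ (Set.range (pbw ρ σ)) :=
    Submodule.subset_span ⟨(0, 0, 0, 0, 0), by simp [pbw]⟩
  refine V_left_induction ρ σ _ hone
    (mul_mem_span_of_basis hE₁) (mul_mem_span_of_basis hE₂)
    (mul_mem_span_of_basis fun i => ?_) (mul_mem_span_of_basis fun i => ?_)
    (mul_mem_span_of_basis fun i => ?_) (mul_mem_span_of_basis fun i => ?_) v
  · refine torus_mul_pbw (K₁_mul_E₁ ρ σ) (K₁_mul_E₂ ρ σ)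
      (j := (i.1, i.2.1, i.2.2.1, i.2.2.2.1 + 1, i.2.2.2.2)) rfl rfl rfl ?_
    change ((uK₁ ρ σ : (Vsl3 ρ σ)ˣ) : Vsl3 ρ σ) * _ = _
    simp only [← Units.val_mul, ← mul_assoc]
    rw [add_comm, zpow_add, zpow_one]
  · refine torus_mul_pbw (qcomm_inv (u := uK₁ ρ σ) h11 (K₁_mul_E₁ ρ σ))
      (qcomm_inv (u := uK₁ ρ σ) h12 (K₁_mul_E₂ ρ σ))
      (j := (i.1, i.2.1, i.2.2.1, -1 + i.2.2.2.1, i.2.2.2.2)) rfl rfl rfl ?_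
    simp only [← Units.val_mul, ← mul_assoc]
    rw [zpow_add, zpow_neg_one]
  · refine torus_mul_pbw (K₂_mul_E₁ ρ σ) (K₂_mul_E₂ ρ σ)
      (j := (i.1, i.2.1, i.2.2.1, i.2.2.2.1, 1 + i.2.2.2.2)) rfl rfl rfl ?_
    change ((uK₂ ρ σ : (Vsl3 ρ σ)ˣ) : Vsl3 ρ σ) * _ = _
    simp only [← Units.val_mul, ← mul_assoc]
    rw [zpow_add, zpow_one, ← mul_assoc, (commute_uK.zpow_left _).eq]
  · refine torus_mul_pbw (qcomm_inv (u := uK₂ ρ σ) h21 (K₂_mul_E₁ ρ σ))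
      (qcomm_inv (u := uK₂ ρ σ) h22 (K₂_mul_E₂ ρ σ))
      (j := (i.1, i.2.1, i.2.2.1, i.2.2.2.1, -1 + i.2.2.2.2)) rfl rfl rfl ?_
    simp only [← Units.val_mul, ← mul_assoc]
    rw [zpow_add, zpow_neg_one, ← mul_assoc, ((commute_uK.zpow_left _).inv_right).eq]

end VAlgebra

/-! ### Embedding `V` into the quantum torus -/

section Embedding

variable {ρ σ : ℂ}

/-- Images of the six generators: `E₁ ↦ x₁ + x₃`, `E₂ ↦ x₂`, and `Kᵢ ↦ Kᵢ`. -/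
def genImage (ρ σ : ℂ) : Fin 6 → Module.End ℂ (QExp →₀ ℂ) :=
  ![lmon ρ σ (1, 0, 0, 0, 0) + lmon ρ σ (0, 0, 1, 0, 0), lmon ρ σ (0, 1, 0, 0, 0),
    lmon ρ σ (0, 0, 0, 1, 0), lmon ρ σ (0, 0, 0, -1, 0),
    lmon ρ σ (0, 0, 0, 0, 1), lmon ρ σ (0, 0, 0, 0, -1)]

lemma genImage_rel (hρ : ρ ≠ 0) (hσ : σ ≠ 0) ⦃x y : FreeAlgebra ℂ (Fin 6)⦄ (h : VRel ρ σ x y) :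
    FreeAlgebra.lift ℂ (genImage ρ σ) x = FreeAlgebra.lift ℂ (genImage ρ σ) y := by
  have h0 : lmon ρ σ (0, 0, 0, 0, 0) = 1 := lmon_zero ρ σ
  cases h <;>
  simp only [map_mul, map_add, map_sub, map_smul, map_one, map_zero, FreeAlgebra.lift_ι_apply,
    genImage, Matrix.cons_val, add_mul, mul_add, lmon_mul hρ hσ, smul_mul_assoc, smul_smul,
    Prod.mk_add_mk] <;>
  norm_num [twist, expA, expB, h0] <;>
  match_scalars <;> field_simp <;> ring

/-- The algebra homomorphism `V → End`, factoring through left multiplications of the quantum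
torus. -/
def Phi (hρ : ρ ≠ 0) (hσ : σ ≠ 0) : Vsl3 ρ σ →ₐ[ℂ] Module.End ℂ (QExp →₀ ℂ) :=
  RingQuot.liftAlgHom ℂ ⟨FreeAlgebra.lift ℂ (genImage ρ σ), genImage_rel hρ hσ⟩

variable (hρ : ρ ≠ 0) (hσ : σ ≠ 0)

lemma Phi_gen (i : Fin 6) :
    Phi hρ hσ (RingQuot.mkAlgHom ℂ (VRel ρ σ) (ι ℂ i)) = genImage ρ σ i := by
  simp [Phi]

lemma Phi_E₁ : Phi hρ hσ (vE₁ ρ σ) = lmon ρ σ (1, 0, 0, 0, 0) + lmon ρ σ (0, 0, 1, 0, 0) :=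
  Phi_gen hρ hσ 0
lemma Phi_E₂ : Phi hρ hσ (vE₂ ρ σ) = lmon ρ σ (0, 1, 0, 0, 0) := Phi_gen hρ hσ 1
lemma Phi_K₁ : Phi hρ hσ (K₁ ρ σ) = lmon ρ σ (0, 0, 0, 1, 0) := Phi_gen hρ hσ 2
lemma Phi_K₁inv : Phi hρ hσ (K₁inv ρ σ) = lmon ρ σ (0, 0, 0, -1, 0) := Phi_gen hρ hσ 3
lemma Phi_K₂ : Phi hρ hσ (K₂ ρ σ) = lmon ρ σ (0, 0, 0, 0, 1) := Phi_gen hρ hσ 4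
lemma Phi_K₂inv : Phi hρ hσ (K₂inv ρ σ) = lmon ρ σ (0, 0, 0, 0, -1) := Phi_gen hρ hσ 5

/-- The element of the quantum torus by which `v` acts, obtained by applying `Phi v` to `1`. -/
def psi : Vsl3 ρ σ →ₗ[ℂ] (QExp →₀ ℂ) :=
  (LinearMap.applyₗ (Finsupp.single 0 1)).comp (Phi hρ hσ).toLinearMap

lemma psi_apply (v : Vsl3 ρ σ) : psi hρ hσ v = Phi hρ hσ v (Finsupp.single 0 1) := rfl

lemma Phi_eq_lmul (v : Vsl3 ρ σ) : Phi hρ hσ v = lmul ρ σ (psi hρ hσ v) := by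
  let W : Submodule ℂ (Vsl3 ρ σ) :=
    LinearMap.eqLocus (Phi hρ hσ).toLinearMap ((lmul ρ σ).comp (psi hρ hσ))
  have hW : ∀ v, v ∈ W ↔ Phi hρ hσ v = lmul ρ σ (psi hρ hσ v) := fun _ => Iff.rfl
  have step : ∀ (x : Vsl3 ρ σ) (g : QExp), Phi hρ hσ x = lmon ρ σ g → ∀ w ∈ W, x * w ∈ W := by
    intro x g hx w hw
    rw [hW] at hw ⊢
    rw [psi_apply, map_mul, hx, Module.End.mul_apply, ← psi_apply, hw, lmon_mul_lmul hρ hσ]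
  refine (hW v).1 (V_left_induction ρ σ W ?_ ?_ (step _ _ (Phi_E₂ hρ hσ)) (step _ _ (Phi_K₁ hρ hσ))
    (step _ _ (Phi_K₁inv hρ hσ)) (step _ _ (Phi_K₂ hρ hσ)) (step _ _ (Phi_K₂inv hρ hσ)) v)
  · rw [hW, psi_apply, map_one, Module.End.one_apply, lmul_single, lmon_zero, one_smul]
  · intro w hw
    rw [hW] at hw ⊢
    rw [psi_apply, map_mul, Phi_E₁, Module.End.mul_apply, ← psi_apply, hw, LinearMap.add_apply,
      map_add, add_mul, lmon_mul_lmul hρ hσ, lmon_mul_lmul hρ hσ]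

lemma psi_mul (u v : Vsl3 ρ σ) : psi hρ hσ (u * v) = lmul ρ σ (psi hρ hσ u) (psi hρ hσ v) := by
  rw [psi_apply, map_mul, Module.End.mul_apply, ← psi_apply, Phi_eq_lmul]

lemma psi_of_lmon {x : Vsl3 ρ σ} {g : QExp} (h : Phi hρ hσ x = lmon ρ σ g) :
    psi hρ hσ x = Finsupp.single g 1 := by
  rw [psi_apply, h, lmon_single]
  simp [twist, expA, expB]

lemma psi_one : psi hρ hσ 1 = Finsupp.single 0 1 := by
  rw [psi_apply, map_one, Module.End.one_apply]

/-- Only nonnegative powers of `x₁`, `x₂`, `x₃` occur in the image of `V`. -/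
lemma psi_support_nonneg (v : Vsl3 ρ σ) :
    ∀ g ∈ (psi hρ hσ v).support, 0 ≤ g.1 ∧ 0 ≤ g.2.1 ∧ 0 ≤ g.2.2.1 := by
  let S : Set QExp := {g | 0 ≤ g.1 ∧ 0 ≤ g.2.1 ∧ 0 ≤ g.2.2.1}
  let W : Submodule ℂ (Vsl3 ρ σ) := (Finsupp.supported ℂ ℂ S).comap (psi hρ hσ)
  have hW : ∀ v, v ∈ W ↔ ∀ g ∈ (psi hρ hσ v).support, g ∈ S := fun _ => Iff.rfl
  have step : ∀ x : Vsl3 ρ σ, x ∈ W → ∀ w ∈ W, x * w ∈ W := by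
    intro x hx w hw
    rw [hW] at hx hw ⊢
    intro g hg
    rw [psi_mul] at hg
    obtain ⟨a, ha, b, hb, rfl⟩ := exists_of_lmul_apply_ne_zero (Finsupp.mem_support_iff.1 hg)
    obtain ⟨a1, a2, a3⟩ := hx a ha
    obtain ⟨b1, b2, b3⟩ := hw b hb
    exact ⟨add_nonneg a1 b1, add_nonneg a2 b2, add_nonneg a3 b3⟩
  have mon : ∀ (x : Vsl3 ρ σ) (g : QExp), g ∈ S → psi hρ hσ x = Finsupp.single g 1 → x ∈ W := by
    intro x g hg hx
    change psi hρ hσ x ∈ Finsupp.supported ℂ ℂ S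
    rw [hx]
    exact Finsupp.single_mem_supported ℂ _ hg
  refine (hW v).1 (V_left_induction ρ σ W (mon _ _ ?_ (psi_one hρ hσ)) (step _ ?_)
    (step _ (mon _ _ ?_ (psi_of_lmon hρ hσ (Phi_E₂ hρ hσ))))
    (step _ (mon _ _ ?_ (psi_of_lmon hρ hσ (Phi_K₁ hρ hσ))))
    (step _ (mon _ _ ?_ (psi_of_lmon hρ hσ (Phi_K₁inv hρ hσ))))
    (step _ (mon _ _ ?_ (psi_of_lmon hρ hσ (Phi_K₂ hρ hσ))))
    (step _ (mon _ _ ?_ (psi_of_lmon hρ hσ (Phi_K₂inv hρ hσ)))) v)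
  · simp [S]
  · change psi hρ hσ _ ∈ Finsupp.supported ℂ ℂ S
    rw [psi_apply, Phi_E₁, LinearMap.add_apply, lmon_single, lmon_single]
    exact Submodule.add_mem _ (Finsupp.single_mem_supported ℂ _ (by simp [S]))
      (Finsupp.single_mem_supported ℂ _ (by simp [S]))
  all_goals simp [S]

lemma IsLead.psi_pow {x : Vsl3 ρ σ} {g : QExp} (h : IsLead (psi hρ hσ x) g) (n : ℕ) :
    IsLead (psi hρ hσ (x ^ n)) (n • g) := by
  induction n with
  | zero => rw [pow_zero, psi_one, zero_smul]; exact isLead_single 0 one_ne_zero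
  | succ n ih => rw [pow_succ, psi_mul, succ_nsmul]; exact ih.lmul hρ hσ h

lemma IsLead.psi_zpow {u : (Vsl3 ρ σ)ˣ} {g : QExp} (h : IsLead (psi hρ hσ u) g)
    (h' : IsLead (psi hρ hσ (u⁻¹ : (Vsl3 ρ σ)ˣ)) (-g)) (n : ℤ) :
    IsLead (psi hρ hσ (u ^ n : (Vsl3 ρ σ)ˣ)) (n • g) := by
  cases n with
  | ofNat n => simpa using h.psi_pow hρ hσ n
  | negSucc n =>
    rw [zpow_negSucc, ← inv_pow, Units.val_pow_eq_pow_val, negSucc_zsmul, ← smul_neg]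
    exact h'.psi_pow hρ hσ (n + 1)

/-- The leading exponent of the PBW monomial with index `i`: the leading terms of `E₁`, `E₂`, `E₃`
are `x₃`, `x₂` and a multiple of `x₂x₁`. -/
def leadExp (i : ℕ × ℕ × ℕ × ℤ × ℤ) : QExp :=
  (i.2.1, i.1 + i.2.1, i.2.2.1, i.2.2.2.1, i.2.2.2.2)

lemma leadExp_injective : Function.Injective leadExp := by
  rintro ⟨c, b, a, m, n⟩ ⟨c', b', a', m', n'⟩ h
  simp only [leadExp, Prod.mk.injEq] at h ⊢
  omega

lemma isLead_pbw (hrs : ρ ^ 3 ≠ σ ^ 3) (i : ℕ × ℕ × ℕ × ℤ × ℤ) :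
    IsLead (psi hρ hσ (pbw ρ σ i)) (leadExp i) := by
  have l1 : IsLead (psi hρ hσ (vE₁ ρ σ)) (0, 0, 1, 0, 0) := by
    have e : psi hρ hσ (vE₁ ρ σ) =
        Finsupp.single (1, 0, 0, 0, 0) 1 + Finsupp.single (0, 0, 1, 0, 0) 1 := by
      rw [psi_apply, Phi_E₁, LinearMap.add_apply, lmon_single, lmon_single]
      simp [twist, expA, expB]
    rw [e]
    constructor
    · simp
    · intro h hh
      rcases Finset.mem_union.1 (Finsupp.support_add hh) with h1 | h1
      · rw [Finset.mem_singleton.1 (Finsupp.support_single_subset h1)]; simp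
      · exact Or.inl (Finset.mem_singleton.1 (Finsupp.support_single_subset h1))
  have l2 : IsLead (psi hρ hσ (vE₂ ρ σ)) (0, 1, 0, 0, 0) := by
    rw [psi_of_lmon hρ hσ (Phi_E₂ hρ hσ)]; exact isLead_single _ one_ne_zero
  have l3 : IsLead (psi hρ hσ (vE₃ ρ σ)) (1, 1, 0, 0, 0) := by
    -- The terms with `x₃` cancel, since `x₃x₂ = s x₂x₃`.
    have e : psi hρ hσ (vE₃ ρ σ) = Finsupp.single (1, 1, 0, 0, 0) (ρ ^ 3 - σ ^ 3) := by
      rw [psi_apply, vE₃, map_sub, map_smul, map_mul, map_mul, Phi_E₁, Phi_E₂]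
      simp only [LinearMap.sub_apply, LinearMap.smul_apply, Module.End.mul_apply,
        LinearMap.add_apply, lmon_single, map_add]
      norm_num [twist, expA, expB, Finsupp.single_sub]
    rw [e]
    exact isLead_single _ (sub_ne_zero.2 hrs)
  have k1 : IsLead (psi hρ hσ (uK₁ ρ σ : (Vsl3 ρ σ)ˣ)) (0, 0, 0, 1, 0) := by
    change IsLead (psi hρ hσ (K₁ ρ σ)) _
    rw [psi_of_lmon hρ hσ (Phi_K₁ hρ hσ)]; exact isLead_single _ one_ne_zero
  have kinv₁ : IsLead (psi hρ hσ ((uK₁ ρ σ)⁻¹ : (Vsl3 ρ σ)ˣ)) (-(0, 0, 0, 1, 0)) := by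
    change IsLead (psi hρ hσ (K₁inv ρ σ)) _
    rw [psi_of_lmon hρ hσ (Phi_K₁inv hρ hσ)]; exact isLead_single _ one_ne_zero
  have k2 : IsLead (psi hρ hσ (uK₂ ρ σ : (Vsl3 ρ σ)ˣ)) (0, 0, 0, 0, 1) := by
    change IsLead (psi hρ hσ (K₂ ρ σ)) _
    rw [psi_of_lmon hρ hσ (Phi_K₂ hρ hσ)]; exact isLead_single _ one_ne_zero
  have kinv₂ : IsLead (psi hρ hσ ((uK₂ ρ σ)⁻¹ : (Vsl3 ρ σ)ˣ)) (-(0, 0, 0, 0, 1)) := by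
    change IsLead (psi hρ hσ (K₂inv ρ σ)) _
    rw [psi_of_lmon hρ hσ (Phi_K₂inv hρ hσ)]; exact isLead_single _ one_ne_zero
  obtain ⟨c, b, a, m, n⟩ := i
  have hl : leadExp (c, b, a, m, n) = c • (0, 1, 0, 0, 0) + (b • (1, 1, 0, 0, 0)
      + (a • (0, 0, 1, 0, 0) + (m • (0, 0, 0, 1, 0) + n • (0, 0, 0, 0, 1)))) := by
    simp [leadExp]
  rw [hl, pbw]
  simp only [psi_mul]
  exact (l2.psi_pow hρ hσ c).lmul hρ hσ <| (l3.psi_pow hρ hσ b).lmul hρ hσ <|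
    (l1.psi_pow hρ hσ a).lmul hρ hσ <| (k1.psi_zpow hρ hσ kinv₁ m).lmul hρ hσ <|
      k2.psi_zpow hρ hσ kinv₂ n

/-- `V` embeds into the quantum torus: the spanning PBW monomials have distinct leading
exponents. -/
lemma psi_injective (hrs : ρ ^ 3 ≠ σ ^ 3) : Function.Injective (psi hρ hσ) := by
  rw [injective_iff_map_eq_zero]
  intro v hv
  obtain ⟨l, rfl⟩ := (Finsupp.mem_span_range_iff_exists_finsupp).1 (span_pbw hρ hσ v)
  by_cases hl : l = 0
  · simp [hl]
  exfalso
  obtain ⟨i, hi, hmax⟩ := Finset.exists_max_image l.support (fun i => i.2.2.1)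
    (Finsupp.support_nonempty_iff.2 hl)
  have h1 := DFunLike.congr_fun hv (leadExp i)
  rw [Finsupp.sum, map_sum, Finsupp.finsetSum_apply, Finset.sum_eq_single i] at h1
  · rw [map_smul, Finsupp.smul_apply, smul_eq_mul, Finsupp.zero_apply] at h1
    exact mul_ne_zero (Finsupp.mem_support_iff.1 hi) (isLead_pbw hρ hσ hrs i).1 h1
  · intro j hj hne
    rw [map_smul, Finsupp.smul_apply, smul_eq_mul]
    by_contra h0
    rcases (isLead_pbw hρ hσ hrs j).2 _ (Finsupp.mem_support_iff.2 (right_ne_zero_of_mul h0))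
      with h2 | h2
    · exact hne (leadExp_injective h2).symm
    · have := hmax j hj
      simp only [leadExp] at h2
      omega
  · exact fun h => absurd hi h

end Embedding

/-! ### Automorphisms -/

/-- A unit of `V` acts by a scalar multiple of a monomial in `K₁`, `K₂`. -/
lemma psi_unit {ρ σ : ℂ} (hρ : ρ ≠ 0) (hσ : σ ≠ 0) {u v : Vsl3 ρ σ} (h : u * v = 1) :
    ∃ (m n : ℤ) (c : ℂ), c ≠ 0 ∧ psi hρ hσ u = Finsupp.single (0, 0, 0, m, n) c := by
  have h1 := psi_mul hρ hσ u v
  rw [h, psi_one] at h1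
  obtain ⟨⟨a, b, e, m, n⟩, c, d, hc, hd, hu, hv⟩ := single_of_lmul_eq_one hρ hσ h1.symm
  -- Neither `u` nor its inverse involves negative powers of the `xᵢ`.
  have p1 := psi_support_nonneg hρ hσ u (a, b, e, m, n) (by rw [hu]; simp [hc])
  have p2 := psi_support_nonneg hρ hσ v (-(a, b, e, m, n)) (by rw [hv]; simp [hd])
  simp only [Prod.neg_mk] at p1 p2
  obtain rfl : a = 0 := by omega
  obtain rfl : b = 0 := by omega
  obtain rfl : e = 0 := by omega
  exact ⟨m, n, c, hc, hu⟩

/-- Comparison of a relation `u e = q e u`, with `u` a multiple of `K₁^m K₂^n`, at an exponent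
occurring in `e`. -/
lemma twist_eq_of_qcomm {ρ σ : ℂ} (hρ : ρ ≠ 0) (hσ : σ ≠ 0) {u e : Vsl3 ρ σ} {m n : ℤ} {c q : ℂ}
    (hc : c ≠ 0) (hu : psi hρ hσ u = Finsupp.single (0, 0, 0, m, n) c)
    (h : u * e = q • (e * u)) {g : QExp} (hg : g ∈ (psi hρ hσ e).support) :
    twist ρ σ (0, 0, 0, m, n) g = q := by
  have hs : ∀ k ∈ (psi hρ hσ u).support, k = (0, 0, 0, m, n) := fun k hk => by
    rw [hu] at hk
    exact Finset.mem_singleton.1 (Finsupp.support_single_subset hk)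
  have u1 : UniqueAdd (psi hρ hσ u).support (psi hρ hσ e).support (0, 0, 0, m, n) g := by
    intro a b ha _ hab
    obtain rfl := hs a ha
    exact ⟨rfl, add_left_cancel hab⟩
  have u2 : UniqueAdd (psi hρ hσ e).support (psi hρ hσ u).support g (0, 0, 0, m, n) := by
    intro a b _ hb hab
    obtain rfl := hs b hb
    exact ⟨add_right_cancel hab, rfl⟩
  have h1 := DFunLike.congr_fun (congrArg (psi hρ hσ) h) ((0, 0, 0, m, n) + g)
  rw [map_smul, psi_mul, psi_mul, Finsupp.smul_apply, lmul_apply_of_unique ρ σ u1, add_comm,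
    lmul_apply_of_unique ρ σ u2, hu] at h1
  have h2 : twist ρ σ g (0, 0, 0, m, n) = 1 := by simp [twist, expA, expB]
  rw [h2, Finsupp.single_eq_same, smul_eq_mul] at h1
  have h3 := Finsupp.mem_support_iff.1 hg
  have h4 : (c * psi hρ hσ e g) * (twist ρ σ (0, 0, 0, m, n) g - q) = 0 := by
    linear_combination h1
  exact sub_eq_zero.1 ((mul_eq_zero.1 h4).resolve_left (mul_ne_zero hc h3))

lemma zpow_independent {ρ σ : ℂ} (hρ : ρ ≠ 0) (hσ : σ ≠ 0)
    (hind : ∀ m n : ℤ, (ρ ^ 3) ^ m * (σ ^ 3) ^ n = 1 → m = 0 ∧ n = 0) {a b c d : ℤ}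
    (h : ρ ^ a * σ ^ b = ρ ^ c * σ ^ d) : a = c ∧ b = d := by
  have h1 : ρ ^ (a - c) * σ ^ (b - d) = 1 := by
    rw [zpow_sub₀ hρ, zpow_sub₀ hσ, div_mul_div_comm, h, div_self]
    exact mul_ne_zero (zpow_ne_zero _ hρ) (zpow_ne_zero _ hσ)
  have h2 := hind (a - c) (b - d) (by
    rw [← zpow_natCast, ← zpow_natCast, zpow_comm, zpow_comm σ, ← mul_zpow, h1, one_zpow])
  omega

/-- The integer equations expressing that `(a, b)` and `(a', b')`, the degrees of the images of
`E₁` and `E₂`, carry the weights of `E₁` and `E₂` after the substitution of exponents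
`[[x, y], [z, w]]`; nonnegativity of the degrees forces the identity matrix. -/
lemma exponents_eq_one {x y z w a b a' b' : ℤ} (ha : 0 ≤ a) (hb : 0 ≤ b) (ha' : 0 ≤ a')
    (h1 : x * (a + b) + y * (2 * b - a) = 1) (h2 : x * (b - 2 * a) - y * (a + b) = -2)
    (h3 : z * (a + b) + w * (2 * b - a) = -1) (h4 : z * (b - 2 * a) - w * (a + b) = -1)
    (h5 : x * (a' + b') + y * (2 * b' - a') = 1) (h6 : x * (b' - 2 * a') - y * (a' + b') = 1)
    (h7 : z * (a' + b') + w * (2 * b' - a') = 2) (h8 : z * (b' - 2 * a') - w * (a' + b') = -1) :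
    x = 1 ∧ y = 0 ∧ z = 0 ∧ w = 1 := by
  have e1 : b + a' = 0 := by grind
  obtain rfl : b = 0 := by omega
  obtain rfl : a' = 0 := by omega
  obtain rfl : y = 0 := by grind
  obtain rfl : z = 0 := by grind
  have hx : x * a = 1 := by linarith
  have hw : w * a = 1 := by linarith
  rcases Int.eq_one_or_neg_one_of_mul_eq_one' hx with ⟨rfl, rfl⟩ | ⟨rfl, rfl⟩
  · simpa using hw
  · omega

/-- Every automorphism of `V` rescales `K₁` and `K₂`. -/
lemma aut_scales {ρ σ : ℂ} (hρ : ρ ≠ 0) (hσ : σ ≠ 0)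
    (hind : ∀ m n : ℤ, (ρ ^ 3) ^ m * (σ ^ 3) ^ n = 1 → m = 0 ∧ n = 0)
    (θ : Vsl3 ρ σ ≃ₐ[ℂ] Vsl3 ρ σ) :
    ∃ a₁ a₂ : ℂ, a₁ ≠ 0 ∧ a₂ ≠ 0 ∧ θ (K₁ ρ σ) = a₁ • K₁ ρ σ ∧ θ (K₂ ρ σ) = a₂ • K₂ ρ σ := by
  have hrs : ρ ^ 3 ≠ σ ^ 3 := by
    intro h
    have := hind 1 (-1) (by
      rw [h, zpow_one, zpow_neg_one, mul_inv_cancel₀ (pow_ne_zero 3 hσ)])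
    omega
  have hinj := psi_injective hρ hσ hrs
  obtain ⟨x, y, c₁, hc₁, hu₁⟩ := psi_unit hρ hσ (u := θ (K₁ ρ σ)) (v := θ (K₁inv ρ σ))
    (by rw [← map_mul, K₁_mul_inv, map_one])
  obtain ⟨z, w, c₂, hc₂, hu₂⟩ := psi_unit hρ hσ (u := θ (K₂ ρ σ)) (v := θ (K₂inv ρ σ))
    (by rw [← map_mul, K₂_mul_inv, map_one])
  have nonzero : ∀ e : Vsl3 ρ σ, psi hρ hσ e ≠ 0 → (psi hρ hσ (θ e)).support.Nonempty := by
    intro e he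
    rw [Finsupp.support_nonempty_iff]
    intro h
    have h1 : θ e = 0 := hinj (by rw [h, map_zero])
    rw [EmbeddingLike.map_eq_zero_iff] at h1
    exact he (by rw [h1, map_zero])
  have hE₁ : psi hρ hσ (vE₁ ρ σ) ≠ 0 := fun h =>
    (isLead_pbw hρ hσ hrs (0, 0, 1, 0, 0)).1 (by simp [pbw, h])
  have hE₂ : psi hρ hσ (vE₂ ρ σ) ≠ 0 := fun h =>
    (isLead_pbw hρ hσ hrs (1, 0, 0, 0, 0)).1 (by simp [pbw, h])
  obtain ⟨g, hg⟩ := nonzero _ hE₁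
  obtain ⟨g', hg'⟩ := nonzero _ hE₂
  obtain ⟨p1, p2, p3⟩ := psi_support_nonneg hρ hσ _ g hg
  obtain ⟨p1', p2', p3'⟩ := psi_support_nonneg hρ hσ _ g' hg'
  have comm : ∀ {k e : Vsl3 ρ σ} {q : ℂ}, k * e = q • (e * k) → θ k * θ e = q • (θ e * θ k) := by
    intro k e q h
    rw [← map_mul, h, map_smul, map_mul]
  have t11 := twist_eq_of_qcomm hρ hσ hc₁ hu₁ (comm (K₁_mul_E₁ ρ σ)) hg
  have t12 := twist_eq_of_qcomm hρ hσ hc₁ hu₁ (comm (K₁_mul_E₂ ρ σ)) hg'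
  have t21 := twist_eq_of_qcomm hρ hσ hc₂ hu₂ (comm (K₂_mul_E₁ ρ σ)) hg
  have t22 := twist_eq_of_qcomm hρ hσ hc₂ hu₂ (comm (K₂_mul_E₂ ρ σ)) hg'
  have q11 := zpow_independent hρ hσ hind (c := 1) (d := -2)
    (t11.trans (by rw [zpow_one, zpow_neg]; norm_cast))
  have q12 := zpow_independent hρ hσ hind (c := 1) (d := 1)
    (t12.trans (by rw [zpow_one, zpow_one]))
  have q21 := zpow_independent hρ hσ hind (c := -1) (d := -1)
    (t21.trans (by rw [zpow_neg_one, zpow_neg_one]))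
  have q22 := zpow_independent hρ hσ hind (c := 2) (d := -1)
    (t22.trans (by rw [zpow_neg_one]; norm_cast))
  simp only [expA, expB] at q11 q12 q21 q22
  obtain ⟨rfl, rfl, rfl, rfl⟩ := exponents_eq_one (x := x) (y := y) (z := z) (w := w)
    (a := g.1 + g.2.2.1) (b := g.2.1) (a' := g'.1 + g'.2.2.1) (b' := g'.2.1)
    (by omega) (by omega) (by omega)
    (by linarith [q11.1]) (by linarith [q11.2]) (by linarith [q21.1]) (by linarith [q21.2])
    (by linarith [q12.1]) (by linarith [q12.2]) (by linarith [q22.1]) (by linarith [q22.2])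
  refine ⟨c₁, c₂, hc₁, hc₂, hinj ?_, hinj ?_⟩
  · rw [hu₁, map_smul, psi_of_lmon hρ hσ (Phi_K₁ hρ hσ), Finsupp.smul_single, smul_eq_mul, mul_one]
  · rw [hu₂, map_smul, psi_of_lmon hρ hσ (Phi_K₂ hρ hσ), Finsupp.smul_single, smul_eq_mul, mul_one]

/-- for any `ℂ`-algebra automorphism `θ` of `Ǔ^{≥0}_{r,s}(sl₃)` there are
`a₁, a₂ ∈ ℂ*` and nonnegative integers `x, y, z, w` with `θ(K₁) = a₁K₁^xK₂^y`,
`θ(K₂) = a₂K₁^zK₂^w`, `xw - yz = ±1`, and the inverse of `[[x,y],[z,w]]` also has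
nonnegative integer entries. -/
theorem stmt4 (ρ σ : ℂ) (hρ : ρ ≠ 0) (hσ : σ ≠ 0)
    (hind : ∀ m n : ℤ, (ρ ^ 3) ^ m * (σ ^ 3) ^ n = 1 → m = 0 ∧ n = 0)
    (θ : Vsl3 ρ σ ≃ₐ[ℂ] Vsl3 ρ σ) :
    ∃ (a₁ a₂ : ℂ) (x y z w : ℕ),
      a₁ ≠ 0 ∧ a₂ ≠ 0 ∧
      θ (K₁ ρ σ) = a₁ • (K₁ ρ σ ^ x * K₂ ρ σ ^ y) ∧
      θ (K₂ ρ σ) = a₂ • (K₁ ρ σ ^ z * K₂ ρ σ ^ w) ∧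
      ((x : ℤ) * w - (y : ℤ) * z = 1 ∨ (x : ℤ) * w - (y : ℤ) * z = -1) ∧
      ∃ x' y' z' w' : ℕ,
        (!![(x : ℤ), y; z, w] : Matrix (Fin 2) (Fin 2) ℤ) * !![(x' : ℤ), y'; z', w'] = 1 ∧
        (!![(x' : ℤ), y'; z', w'] : Matrix (Fin 2) (Fin 2) ℤ) * !![(x : ℤ), y; z, w] = 1 := by
  obtain ⟨a₁, a₂, h₁, h₂, e₁, e₂⟩ := aut_scales hρ hσ hind θ
  refine ⟨a₁, a₂, 1, 0, 0, 1, h₁, h₂, by simpa using e₁, by simpa using e₂, by simp,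
    1, 0, 0, 1, ?_, ?_⟩ <;>
  simp [Matrix.one_fin_two]
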